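/- arXiv:2106.08293 — 3 statements merged into one kernel-verified Lean document; each statement's English description precedes it below -/
import Mathlib

section
/- For each i ∈ {2, 3, 4, 5} and every ν₀ > 0 there exist constants C(ν₀) > 0 and ε₀ > 0 such that for all 0 < ε ≤ ε₀ and every q ∈ H¹(−1,1): ‖q‖_{L^∞([−1,1])}² ≤ ν₀ ∫_{−1}^{1} ((q′)² + ε⁻²κᵢ(s_ε)q²) dr + C(ν₀) ∫_{−1}^{1} q² dr. -/
/-!
The quadratic form is controlled through a Riccati subsolution. If `W` is `C¹` with `W' + W² ≤ V + 3`,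
`W (-1) = 0` and `0 ≤ W`, completing the square gives
`∫ (q' - W q)² ≤ ∫ (q'² + V q²) + 3 ∫ q²` (the boundary term `W(1) q(1)²` has the good sign).
With `p = q' - W q` one has `(q²)' = 2 q p + 2 W q²`. As `W ≥ 0`, the value `q(x)²` is controlled by
`q(y)²` for every `y ≥ x`; if moreover `W ≤ 2` on `[1/2, 1]`, it is also controlled by `q(y)²` for
`1/2 ≤ y ≤ x`. Averaging over `y ∈ [1/2, 1]` yields the `L^∞` bound (`sup_bound_of_riccati`).

For `i = 4, 5` take `W = 0`. For `i = 2`, the profile `s` is a positive solution of `ℒ₂ s = 0`, so its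
logarithmic derivative `w = s_ε' / s_ε` solves `w' + w² = ε⁻² κ₂(s_ε)`, but `w (-1) ≈ √2 / ε` is large.
Multiplying `w` by the cutoff `χ(r) = 1 - min(r, 0)²` makes the boundary term vanish. The defect is, for
`r < 0`, at least `r² w² / 3 - 2 |r| w ≥ -3`: near `r = -1` the potential is positive of order `w²`,
and away from it the term `χ (1 - χ) w²` takes over. Finally `κ₃(s(z)) = κ₂(s(-z))`, so `i = 3` follows
from `i = 2` by the reflection `r ↦ -r`.
-/

/-- The standard one-dimensional Allen–Cahn transition profile. -/
noncomputable def sAC (z : ℝ) : ℝ := 1 - (1 + Real.exp (Real.sqrt 2 * z))⁻¹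

/-- The rescaled profile `s_ε(r) = s(r/ε)`. -/
noncomputable def sE (ε r : ℝ) : ℝ := sAC (r / ε)

/-- The potentials `κᵢ` of the scalar linearized operators `ℒᵢu = −u″ + κᵢ(s)u`. -/
noncomputable def kappa : ℕ → ℝ → ℝ
  | 1, t => 2 * (1 - 6 * t + 6 * t ^ 2)
  | 2, t => 2 * (1 - t) * (1 - 2 * t)
  | 3, t => 2 * t * (2 * t - 1)
  | 4, _ => 0
  | 5, _ => 2
  | _, _ => 0

open intervalIntegral in
/-- `L^∞` bound by the quadratic form of `-u'' + V u`, given a Riccati subsolution `W` of `V + 3`. -/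
lemma sup_bound_of_riccati (ν : ℝ) (hν : 0 < ν) (V W W' : ℝ → ℝ) (hV : Continuous V)
    (hW : ∀ r, HasDerivAt W (W' r) r) (hW' : Continuous W')
    (hric : ∀ r ∈ Set.Icc (-1 : ℝ) 1, W' r + W r ^ 2 ≤ V r + 3)
    (hpos : ∀ r ∈ Set.Icc (-1 : ℝ) 1, 0 ≤ W r) (hleft : W (-1) = 0)
    (hright : ∀ r ∈ Set.Icc (1 / 2 : ℝ) 1, W r ≤ 2)
    (q : ℝ → ℝ) (hq : ContDiff ℝ 1 q) (x : ℝ) (hx : x ∈ Set.Icc (-1 : ℝ) 1) :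
    (q x) ^ 2 ≤ ν * (∫ r in (-1 : ℝ)..1, ((deriv q r) ^ 2 + V r * (q r) ^ 2))
      + (3 * ν + 1 / ν + 6) * ∫ r in (-1 : ℝ)..1, (q r) ^ 2 := by
  have hq' : Continuous (deriv q) := hq.continuous_deriv le_rfl
  have hqc : Continuous q := hq.continuous
  have hWc : Continuous W := continuous_iff_continuousAt.2 fun r => (hW r).continuousAt
  have hqd : ∀ r, HasDerivAt q (deriv q r) r := fun r =>
    (hq.differentiable one_ne_zero r).hasDerivAt
  set p : ℝ → ℝ := fun r => deriv q r - W r * q r with hp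
  have hpc : Continuous p := by fun_prop
  have hsq : ∀ r, HasDerivAt (fun r => q r ^ 2) (2 * q r * deriv q r) r := fun r => by
    have h := (hqd r).pow 2
    simp only [Nat.cast_ofNat, Nat.add_one_sub_one, pow_one] at h
    exact h
  have hsqc : Continuous (fun r => 2 * q r * deriv q r) := by fun_prop
  have ftc : ∀ a b, ∫ r in a..b, 2 * q r * deriv q r = q b ^ 2 - q a ^ 2 := fun a b =>
    integral_eq_sub_of_hasDerivAt (fun r _ => hsq r) (hsqc.intervalIntegrable _ _)
  have h1 : ∫ r in (-1 : ℝ)..1, p r ^ 2 ≤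
      (∫ r in (-1 : ℝ)..1, ((deriv q r) ^ 2 + V r * (q r) ^ 2))
        + 3 * ∫ r in (-1 : ℝ)..1, (q r) ^ 2 := by
    have hbd : ∫ r in (-1 : ℝ)..1, (W' r * q r ^ 2 + W r * (2 * q r * deriv q r))
        = W 1 * q 1 ^ 2 - W (-1) * q (-1) ^ 2 :=
      integral_eq_sub_of_hasDerivAt (fun r _ => (hW r).mul (hsq r))
        (Continuous.intervalIntegrable (by fun_prop) _ _)
    have hb0 : 0 ≤ ∫ r in (-1 : ℝ)..1, (W' r * q r ^ 2 + W r * (2 * q r * deriv q r)) := by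
      rw [hbd, hleft]
      have := mul_nonneg (hpos 1 (by norm_num)) (sq_nonneg (q 1))
      linarith
    have hmono : ∫ r in (-1 : ℝ)..1, (p r ^ 2 + (W' r * q r ^ 2 + W r * (2 * q r * deriv q r)))
        ≤ ∫ r in (-1 : ℝ)..1, (((deriv q r) ^ 2 + V r * (q r) ^ 2) + 3 * (q r) ^ 2) := by
      apply integral_mono_on (by norm_num) (Continuous.intervalIntegrable (by fun_prop) _ _)
        (Continuous.intervalIntegrable (by fun_prop) _ _)
      intro r hr
      have := mul_le_mul_of_nonneg_right (hric r hr) (sq_nonneg (q r))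
      simp only [hp]
      linarith
    rw [integral_add (Continuous.intervalIntegrable (by fun_prop) _ _)
        (Continuous.intervalIntegrable (by fun_prop) _ _),
      integral_add (f := fun r => (deriv q r) ^ 2 + V r * (q r) ^ 2)
        (Continuous.intervalIntegrable (by fun_prop) _ _)
        (Continuous.intervalIntegrable (by fun_prop) _ _), integral_const_mul] at hmono
    linarith
  set F : ℝ → ℝ := fun r => ν * p r ^ 2 + (1 / ν + 4) * q r ^ 2 with hF
  have hFc : Continuous F := by fun_prop
  have hF0 : ∀ r, 0 ≤ F r := fun r => by positivity
  have hyoung : ∀ r, |2 * q r * p r| ≤ ν * p r ^ 2 + 1 / ν * q r ^ 2 := fun r => by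
    have e : ν * (1 / ν) = 1 := by field_simp
    have i0 : 0 < 1 / ν := by positivity
    rw [abs_le]
    constructor
    · have := mul_nonneg hν.le (sq_nonneg (p r + 1 / ν * q r))
      have e2 : ν * (p r + 1 / ν * q r) ^ 2
        = ν * p r ^ 2 + 2 * (ν * (1 / ν)) * q r * p r + (ν * (1 / ν)) * (1 / ν) * q r ^ 2 := by ring
      rw [e2, e] at this
      linarith
    · have := mul_nonneg hν.le (sq_nonneg (p r - 1 / ν * q r))
      have e2 : ν * (p r - 1 / ν * q r) ^ 2
        = ν * p r ^ 2 - 2 * (ν * (1 / ν)) * q r * p r + (ν * (1 / ν)) * (1 / ν) * q r ^ 2 := by ring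
      rw [e2, e] at this
      linarith
  have hFle : ∀ a b, -1 ≤ a → a ≤ b → b ≤ 1 → ∫ r in a..b, F r ≤ ∫ r in (-1 : ℝ)..1, F r :=
    fun a b ha hab hb => integral_mono_interval ha hab hb (Filter.Eventually.of_forall hF0)
      (hFc.intervalIntegrable _ _)
  have h2 : ∀ y ∈ Set.Icc (1 / 2 : ℝ) 1, q x ^ 2 ≤ q y ^ 2 + ∫ r in (-1 : ℝ)..1, F r := by
    intro y hy
    rcases le_total x y with hxy | hyx
    · have hm : ∫ r in x..y, -(2 * q r * deriv q r) ≤ ∫ r in x..y, F r := by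
        apply integral_mono_on hxy (Continuous.intervalIntegrable (by fun_prop) _ _)
          (hFc.intervalIntegrable _ _)
        intro r hr
        have hw := hpos r ⟨hx.1.trans hr.1, hr.2.trans hy.2⟩
        have := mul_nonneg hw (sq_nonneg (q r))
        have hyo := (abs_le.1 (hyoung r)).1
        have := sq_nonneg (q r)
        simp only [hF]
        have e : 2 * q r * p r = 2 * q r * deriv q r - 2 * (W r * q r ^ 2) := by
          simp only [hp]; ring
        linarith
      rw [integral_neg, ftc] at hm
      linarith [hFle x y hx.1 hxy hy.2]
    · have hm : ∫ r in y..x, (2 * q r * deriv q r) ≤ ∫ r in y..x, F r := by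
        apply integral_mono_on hyx (Continuous.intervalIntegrable (by fun_prop) _ _)
          (hFc.intervalIntegrable _ _)
        intro r hr
        have hw := hright r ⟨hy.1.trans hr.1, hr.2.trans hx.2⟩
        have := mul_le_mul_of_nonneg_right hw (sq_nonneg (q r))
        have hyo := (abs_le.1 (hyoung r)).2
        simp only [hF]
        have e : 2 * q r * p r = 2 * q r * deriv q r - 2 * (W r * q r ^ 2) := by
          simp only [hp]; ring
        linarith
      rw [ftc] at hm
      linarith [hFle y x (by linarith [hy.1]) hyx hx.2]
  -- average over `y ∈ [1/2, 1]`
  have h3 : ∫ _y in (1 / 2 : ℝ)..1, (q x ^ 2 - ∫ r in (-1 : ℝ)..1, F r)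
      ≤ ∫ y in (1 / 2 : ℝ)..1, q y ^ 2 := by
    apply integral_mono_on (by norm_num) (Continuous.intervalIntegrable (by fun_prop) _ _)
      (Continuous.intervalIntegrable (by fun_prop) _ _)
    intro y hy
    linarith [h2 y hy]
  have h4 : ∫ y in (1 / 2 : ℝ)..1, q y ^ 2 ≤ ∫ y in (-1 : ℝ)..1, q y ^ 2 :=
    integral_mono_interval (by norm_num) (by norm_num) le_rfl
      (Filter.Eventually.of_forall fun r => sq_nonneg (q r))
      (Continuous.intervalIntegrable (by fun_prop) _ _)
  have h5 : ∫ r in (-1 : ℝ)..1, F r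
      = ν * (∫ r in (-1 : ℝ)..1, p r ^ 2) + (1 / ν + 4) * ∫ r in (-1 : ℝ)..1, q r ^ 2 := by
    simp only [hF]
    rw [integral_add (Continuous.intervalIntegrable (by fun_prop) _ _)
      (Continuous.intervalIntegrable (by fun_prop) _ _), integral_const_mul, integral_const_mul]
  rw [integral_const, smul_eq_mul] at h3
  have h6 := mul_le_mul_of_nonneg_left h1 hν.le
  linarith

lemma hasDerivAt_min_zero_sq (r : ℝ) :
    HasDerivAt (fun r : ℝ => min r 0 ^ 2) (2 * min r 0) r := by
  rcases lt_trichotomy r 0 with h | h | h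
  · have h1 : HasDerivAt (fun r : ℝ => r ^ 2) (2 * min r 0) r := by
      simpa [min_eq_left h.le] using hasDerivAt_pow 2 r
    refine h1.congr_of_eventuallyEq ?_
    filter_upwards [Iio_mem_nhds h] with y hy
    rw [min_eq_left (le_of_lt hy)]
  · subst h
    -- `min r 0 ^ 2` is squeezed between `0` and `r ^ 2`
    rw [hasDerivAt_iff_isLittleO]
    have h0 : (fun x : ℝ => x ^ 2) =o[nhds 0] fun x => x := by
      simpa using Asymptotics.isLittleO_pow_id (𝕜 := ℝ) (n := 2) (by norm_num)
    simp only [min_self, mul_zero, smul_zero, sub_zero]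
    refine Asymptotics.IsBigO.trans_isLittleO (Asymptotics.IsBigO.of_bound 1 ?_) h0
    refine Filter.Eventually.of_forall fun y => ?_
    rcases le_total y 0 with hy | hy <;> simp [hy]
  · have h1 : HasDerivAt (fun _ : ℝ => (0 : ℝ)) (2 * min r 0) r := by
      simpa [min_eq_right h.le] using hasDerivAt_const r (0 : ℝ)
    refine h1.congr_of_eventuallyEq ?_
    filter_upwards [Ioi_mem_nhds h] with y hy
    simp [min_eq_right (Set.mem_Ioi.1 hy).le]

/-- The logistic function `(1 + e^{a r})⁻¹`; it equals `1 - s_ε(r)` for `a = √2 / ε` (`sE_eq`). -/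
noncomputable def gAC (a r : ℝ) : ℝ := (1 + Real.exp (a * r))⁻¹

lemma gAC_pos (a r : ℝ) : 0 < gAC a r := by unfold gAC; positivity

lemma gAC_le_one (a r : ℝ) : gAC a r ≤ 1 := by
  unfold gAC
  exact inv_le_one_of_one_le₀ (by linarith [Real.exp_pos (a * r)])

lemma hasDerivAt_gAC (a r : ℝ) : HasDerivAt (gAC a) (-(a * (gAC a r * (1 - gAC a r)))) r := by
  have h1 : HasDerivAt (fun r => 1 + Real.exp (a * r)) (Real.exp (a * r) * a) r := by
    have := (((hasDerivAt_id r).const_mul a).exp).const_add 1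
    simpa using this
  have hne : 1 + Real.exp (a * r) ≠ 0 := by positivity
  have h2 := h1.inv hne
  have e : -(a * (gAC a r * (1 - gAC a r))) = -(Real.exp (a * r) * a) / (1 + Real.exp (a * r)) ^ 2 := by
    unfold gAC
    field_simp
    ring
  rw [e]
  exact h2

lemma continuous_gAC (a : ℝ) : Continuous (gAC a) :=
  continuous_iff_continuousAt.2 fun r => (hasDerivAt_gAC a r).continuousAt

lemma le_gAC_of_neg {a t : ℝ} (ha : 1 ≤ a) (ht : 0 ≤ t) : 1 + t ≤ gAC a (-t) * (2 + t) := by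
  have h1 : 1 + t ≤ Real.exp (a * t) := by
    nlinarith [Real.add_one_le_exp (a * t)]
  have h2 : Real.exp (a * -t) * Real.exp (a * t) = 1 := by
    rw [← Real.exp_add]; simp
  have h3 : Real.exp (a * -t) * (1 + t) ≤ 1 :=
    (mul_le_mul_of_nonneg_left h1 (Real.exp_pos _).le).trans_eq h2
  unfold gAC
  rw [inv_mul_eq_div, le_div_iff₀ (by positivity)]
  linarith

lemma mul_gAC_le_two {a r : ℝ} (ha : 1 ≤ a) (hr : 1 / 2 ≤ r) : a * gAC a r ≤ 2 := by
  unfold gAC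
  rw [← div_eq_mul_inv, div_le_iff₀ (by positivity)]
  nlinarith [Real.add_one_le_exp (a * r)]

/-- The truncated logarithmic derivative of `s_ε` is a subsolution of the Riccati equation of
`ε⁻² κ₂(s_ε) + 3`, the potential being `a² g (2 g - 1)` with `g = 1 - s_ε`. -/
lemma riccati_le {a r : ℝ} (ha : 1 ≤ a) (hr : -1 ≤ r) :
    -(2 * min r 0) * (a * gAC a r)
        + (1 - min r 0 ^ 2) * (a * -(a * (gAC a r * (1 - gAC a r))))
        + ((1 - min r 0 ^ 2) * (a * gAC a r)) ^ 2
      ≤ a ^ 2 * (gAC a r * (2 * gAC a r - 1)) + 3 := by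
  rcases le_total 0 r with h | h
  · rw [min_eq_right h]
    nlinarith
  · rw [min_eq_left h]
    obtain ⟨t, rfl⟩ : ∃ t, r = -t := ⟨-r, by ring⟩
    have ht : 0 ≤ t := by linarith
    have ht1 : t ≤ 1 := by linarith
    have hg := le_gAC_of_neg ha ht
    have hg0 := gAC_pos a (-t)
    have hg1 := gAC_le_one a (-t)
    set g := gAC a (-t)
    have hgh : 1 ≤ 2 * g := by nlinarith
    -- `2 - 2 / (2 + t) - t²` is concave on `[0, 1]`, with endpoint values `1` and `1/3`
    have hc : 1 / 3 ≤ (2 * g - 1) + (1 - t ^ 2) := by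
      have : (0 : ℝ) ≤ (2 + t) * ((2 * g - 1) + (1 - t ^ 2) - 1 / 3) := by
        nlinarith [mul_nonneg ht (sub_nonneg.2 ht1), mul_nonneg (mul_nonneg ht ht) (sub_nonneg.2 ht1)]
      have := nonneg_of_mul_nonneg_right this (by linarith)
      linarith
    have k1 := mul_le_mul_of_nonneg_left hc (sq_nonneg (t * (a * g)))
    have k2 : 0 ≤ (t * a) ^ 2 * (g * (2 * g - 1) * (1 - g)) :=
      mul_nonneg (sq_nonneg _) (mul_nonneg (mul_nonneg hg0.le (by linarith)) (by linarith))
    have k3 := sq_nonneg (t * (a * g) - 3)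
    nlinarith

lemma sE_eq (ε r : ℝ) : sE ε r = 1 - gAC (Real.sqrt 2 / ε) r := by
  unfold sE sAC gAC
  rw [show Real.sqrt 2 * (r / ε) = Real.sqrt 2 / ε * r by ring]

lemma kappa_two_eq (ε r : ℝ) : (ε ^ 2)⁻¹ * kappa 2 (sE ε r) =
    (Real.sqrt 2 / ε) ^ 2 * (gAC (Real.sqrt 2 / ε) r * (2 * gAC (Real.sqrt 2 / ε) r - 1)) := by
  rw [sE_eq, div_pow, Real.sq_sqrt (by norm_num)]
  simp only [kappa]
  ring

lemma sE_neg (ε r : ℝ) : sE ε (-r) = 1 - sE ε r := by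
  rw [sE_eq, sE_eq]
  unfold gAC
  rw [mul_neg, Real.exp_neg]
  have := Real.exp_pos (Real.sqrt 2 / ε * r)
  field_simp
  ring

lemma kappa_three_eq (ε r : ℝ) : kappa 3 (sE ε r) = kappa 2 (sE ε (-r)) := by
  rw [sE_neg]
  simp only [kappa]
  ring

lemma sup_bound_two (ν : ℝ) (hν : 0 < ν) (ε : ℝ) (hε : 0 < ε) (hε1 : ε ≤ 1)
    (q : ℝ → ℝ) (hq : ContDiff ℝ 1 q) (x : ℝ) (hx : x ∈ Set.Icc (-1 : ℝ) 1) :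
    (q x) ^ 2 ≤ ν * (∫ r in (-1 : ℝ)..1,
        ((deriv q r) ^ 2 + (ε ^ 2)⁻¹ * kappa 2 (sE ε r) * (q r) ^ 2))
      + (3 * ν + 1 / ν + 6) * ∫ r in (-1 : ℝ)..1, (q r) ^ 2 := by
  simp only [kappa_two_eq]
  set a := Real.sqrt 2 / ε with ha_def
  have ha : 1 ≤ a := by
    rw [ha_def, le_div_iff₀ hε, one_mul]
    exact hε1.trans (Real.one_le_sqrt.2 (by norm_num))
  have ha0 : 0 < a := by linarith
  have hgc := continuous_gAC a
  refine sup_bound_of_riccati ν hν (fun r => a ^ 2 * (gAC a r * (2 * gAC a r - 1)))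
    (fun r => (1 - min r 0 ^ 2) * (a * gAC a r))
    (fun r => -(2 * min r 0) * (a * gAC a r)
        + (1 - min r 0 ^ 2) * (a * -(a * (gAC a r * (1 - gAC a r)))))
    (by fun_prop) ?_ (by fun_prop) ?_ ?_ ?_ ?_ q hq x hx
  · intro r
    exact ((hasDerivAt_min_zero_sq r).const_sub 1).mul ((hasDerivAt_gAC a r).const_mul a)
  · intro r hr
    exact riccati_le ha hr.1
  · intro r hr
    have h1 : min r 0 ^ 2 ≤ 1 := by
      have h2 : -1 ≤ min r 0 := le_min hr.1 (by norm_num)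
      have h3 : min r 0 ≤ 0 := min_le_right _ _
      nlinarith
    exact mul_nonneg (by linarith) (mul_pos ha0 (gAC_pos a r)).le
  · norm_num
  · intro r hr
    have : min r 0 = 0 := min_eq_right (by linarith [hr.1])
    simpa [this] using mul_gAC_le_two ha hr.1

/-- `L^∞` control by the quadratic forms of `ℒᵢ`, `i ∈ {2,3,4,5}` (Lemma 7.7). -/
theorem stmt12 (i : ℕ) (hi : i = 2 ∨ i = 3 ∨ i = 4 ∨ i = 5)
    (ν₀ : ℝ) (hν₀ : 0 < ν₀) :
    ∃ C > (0 : ℝ), ∃ ε₀ > (0 : ℝ), ∀ ε : ℝ, 0 < ε → ε ≤ ε₀ →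
      ∀ q : ℝ → ℝ, ContDiff ℝ 1 q → ∀ x ∈ Set.Icc (-1 : ℝ) 1,
        (q x) ^ 2 ≤
          ν₀ * (∫ r in (-1 : ℝ)..1,
              ((deriv q r) ^ 2 + (ε ^ 2)⁻¹ * kappa i (sE ε r) * (q r) ^ 2))
            + C * ∫ r in (-1 : ℝ)..1, (q r) ^ 2 := by
  refine ⟨3 * ν₀ + 1 / ν₀ + 6, by positivity, 1, one_pos, ?_⟩
  intro ε hε hε1 q hq x hx
  rcases hi with rfl | rfl | rfl | rfl
  · exact sup_bound_two ν₀ hν₀ ε hε hε1 q hq x hx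
  · have h := sup_bound_two ν₀ hν₀ ε hε hε1 (fun r => q (-r)) (hq.comp contDiff_neg) (-x)
      ⟨by linarith [hx.2], by linarith [hx.1]⟩
    have e1 := intervalIntegral.integral_comp_neg (a := -1) (b := 1) (fun r => q r ^ 2)
    have e2 := intervalIntegral.integral_comp_neg (a := -1) (b := 1)
      (fun r => (deriv q r) ^ 2 + (ε ^ 2)⁻¹ * kappa 3 (sE ε r) * (q r) ^ 2)
    simp only [kappa_three_eq, neg_neg] at e1 e2 ⊢
    simp only [deriv_comp_neg, neg_sq, neg_neg] at h
    rwa [e1, e2] at h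
  · exact sup_bound_of_riccati ν₀ hν₀ (fun r => (ε ^ 2)⁻¹ * kappa 4 (sE ε r)) (fun _ => 0)
      (fun _ => 0) (by simp only [kappa]; fun_prop) (fun r => hasDerivAt_const r 0) (by fun_prop)
      (by intro r _; simp [kappa]) (by simp) rfl (by norm_num) q hq x hx
  · exact sup_bound_of_riccati ν₀ hν₀ (fun r => (ε ^ 2)⁻¹ * kappa 5 (sE ε r)) (fun _ => 0)
      (fun _ => 0) (by simp only [kappa]; fun_prop) (fun r => hasDerivAt_const r 0) (by fun_prop)
      (by intro r _; simp only [kappa]; have : 0 < (ε ^ 2)⁻¹ := by positivity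
          linarith) (by simp) rfl (by norm_num) q hq x hx
end

section
/- There exist constants C > 0 and ε₀ > 0 such that for all 0 < ε ≤ ε₀ and every q ∈ H¹(−1,1): |q(1)|² + |q(−1)|² ≤ C ε ( ∫_{−1}^{1} ((q′)² + ε⁻²κ₁(s_ε)q²) dr + ∫_{−1}^{1} q² dr ). -/
/-- The potential `ε⁻² κ₁(s_ε(r))`. -/
noncomputable def potE (ε r : ℝ) : ℝ :=
  (ε ^ 2)⁻¹ * (2 * (1 - 6 * sE ε r + 6 * (sE ε r) ^ 2))

/-- The logarithmic derivative of `cosh(kr)⁻² + ε⁴ cosh(kr)²`. -/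
noncomputable def ricW (ε k r : ℝ) : ℝ :=
  2 * k * (Real.sinh (k * r) * (ε ^ 4 * Real.cosh (k * r) ^ 4 - 1))
    / (Real.cosh (k * r) * (ε ^ 4 * Real.cosh (k * r) ^ 4 + 1))

/-- The quotient `Ψ''/Ψ` for `Ψ = cosh(kr)⁻² + ε⁴ cosh(kr)²`. -/
noncomputable def ricV (ε k r : ℝ) : ℝ :=
  k ^ 2 * (4 - 6 / Real.cosh (k * r) ^ 2
    + 4 * ε ^ 4 * Real.cosh (k * r) ^ 2 / (1 + ε ^ 4 * Real.cosh (k * r) ^ 4))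

/-- The Riccati identity `w' + w² = Ψ''/Ψ` for `w = Ψ'/Ψ`. -/
lemma ricW_hasDerivAt (ε k r : ℝ) :
    HasDerivAt (ricW ε k) (ricV ε k r - ricW ε k r ^ 2) r := by
  have hl : HasDerivAt (fun r : ℝ => k * r) k r := by
    simpa using (hasDerivAt_id r).const_mul k
  have hs := hl.sinh
  have hc := hl.cosh
  have hcpos : 0 < Real.cosh (k * r) := Real.cosh_pos _
  have hden : 0 < ε ^ 4 * Real.cosh (k * r) ^ 4 + 1 := by positivity
  have hg := (hc.pow 4).const_mul (ε ^ 4)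
  have h := ((hs.mul (hg.sub_const 1)).const_mul (2 * k)).div (hc.mul (hg.add_const 1))
    (by simpa using (mul_pos hcpos hden).ne')
  have hsq : Real.sinh (k * r) ^ 2 = Real.cosh (k * r) ^ 2 - 1 := Real.sinh_sq _
  refine HasDerivAt.congr_deriv (f := ricW ε k) h (Eq.symm ?_)
  simp only [ricV, ricW, Pi.mul_apply, Pi.pow_apply, Nat.cast_ofNat, Nat.add_one_sub_one]
  have hden' : 1 + ε ^ 4 * Real.cosh (k * r) ^ 4 ≠ 0 := by positivity
  generalize Real.sinh (k * r) = S at *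
  generalize Real.cosh (k * r) = c at *
  have hc0 := hcpos.ne'
  have hd0 := hden.ne'
  rw [add_comm 1 (ε ^ 4 * c ^ 4)]
  field_simp
  rw [hsq]
  ring

lemma continuous_sE (ε : ℝ) : Continuous (sE ε) := by
  unfold sE sAC
  have : ∀ r : ℝ, 1 + Real.exp (Real.sqrt 2 * (r / ε)) ≠ 0 := fun r => by positivity
  fun_prop (disch := assumption)

lemma continuous_ricW (ε k : ℝ) : Continuous (ricW ε k) :=
  continuous_iff_continuousAt.2 fun r => (ricW_hasDerivAt ε k r).continuousAt

lemma continuous_ricV (ε k : ℝ) : Continuous (ricV ε k) := by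
  unfold ricV
  have h1 : ∀ r : ℝ, Real.cosh (k * r) ^ 2 ≠ 0 := fun r => by
    have := Real.cosh_pos (k * r); positivity
  have h2 : ∀ r : ℝ, 1 + ε ^ 4 * Real.cosh (k * r) ^ 4 ≠ 0 := fun r => by positivity
  fun_prop (disch := assumption)

/-- `κ₁(s_ε) = 2 - 3 / cosh²`. -/
lemma kappa_eq (ε r : ℝ) :
    2 * (1 - 6 * sE ε r + 6 * (sE ε r) ^ 2)
      = 2 - 3 / Real.cosh (Real.sqrt 2 / (2 * ε) * r) ^ 2 := by
  have he : Real.sqrt 2 * (r / ε)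
      = Real.sqrt 2 / (2 * ε) * r + Real.sqrt 2 / (2 * ε) * r := by
    rw [mul_comm 2 ε, ← div_div]
    ring
  unfold sE sAC
  rw [he, Real.exp_add, Real.cosh_eq, Real.exp_neg]
  have hE : 0 < Real.exp (Real.sqrt 2 / (2 * ε) * r) := Real.exp_pos _
  generalize Real.exp (Real.sqrt 2 / (2 * ε) * r) = E at *
  have h1 : 1 + E * E ≠ 0 := by positivity
  have h2 : E ^ 2 + 1 ≠ 0 := by positivity
  field_simp
  ring

/-- `Ψ` is a supersolution: `Ψ''/Ψ ≤ ε⁻² κ₁(s_ε) + 1`. -/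
lemma ricV_le {ε : ℝ} (hε : 0 < ε) (r : ℝ) :
    ricV ε (Real.sqrt 2 / (2 * ε)) r ≤ potE ε r + 1 := by
  unfold potE ricV
  rw [kappa_eq]
  have hk : (Real.sqrt 2 / (2 * ε)) ^ 2 = 1 / (2 * ε ^ 2) := by
    rw [div_pow, Real.sq_sqrt (by norm_num)]
    field_simp
  rw [hk]
  generalize Real.cosh (Real.sqrt 2 / (2 * ε) * r) = c
  have h : 4 * ε ^ 4 * c ^ 2 / (1 + ε ^ 4 * c ^ 4) ≤ 2 * ε ^ 2 := by
    rw [div_le_iff₀ (by positivity)]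
    nlinarith [mul_nonneg (sq_nonneg ε) (sq_nonneg (ε ^ 2 * c ^ 2 - 1))]
  calc _ ≤ 1 / (2 * ε ^ 2) * (4 - 6 / c ^ 2 + 2 * ε ^ 2) := by gcongr
    _ = (ε ^ 2)⁻¹ * (2 - 3 / c ^ 2) + 1 := by
      generalize hx : (c ^ 2)⁻¹ = x
      simp only [div_eq_mul_inv, hx]
      field_simp
      ring

/-- For small `ε` the growing term of `Ψ` dominates at the endpoint, so `w(1)` is positive of
order `1/ε`. -/
lemma ricW_one {ε : ℝ} (hε : 0 < ε) (h8 : ε ≤ 1 / 8) :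
    1 / (2 * ε) ≤ ricW ε (Real.sqrt 2 / (2 * ε)) 1 := by
  have h2 : (1.4 : ℝ) ≤ Real.sqrt 2 := Real.le_sqrt_of_sq_le (by norm_num)
  have hk : (Real.sqrt 2 / (2 * ε)) ^ 2 = 1 / (2 * ε ^ 2) := by
    rw [div_pow, Real.sq_sqrt (by norm_num)]
    field_simp
  have hkl : 0.7 / ε ≤ Real.sqrt 2 / (2 * ε) := by
    rw [div_le_div_iff₀ hε (by positivity)]
    nlinarith
  have hk1 : 1 ≤ Real.sqrt 2 / (2 * ε) := by
    refine le_trans ?_ hkl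
    rw [le_div_iff₀ hε]
    linarith
  unfold ricW
  rw [mul_one]
  generalize Real.sqrt 2 / (2 * ε) = k at *
  have hc : 1 + k ^ 2 / 2 ≤ Real.cosh k := by
    have e1 := Real.cosh_sq' (k / 2)
    have e2 := Real.cosh_two_mul (k / 2)
    have e3 : k / 2 ≤ Real.sinh (k / 2) := Real.self_le_sinh_iff.2 (by linarith)
    rw [mul_div_cancel₀ k (by norm_num : (2 : ℝ) ≠ 0)] at e2
    nlinarith
  have hs : Real.cosh k / 2 ≤ Real.sinh k := by
    have e1 : k + 1 ≤ Real.exp k := Real.add_one_le_exp k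
    have e2 : Real.exp (-k) ≤ 1 := Real.exp_le_one_iff.2 (by linarith)
    have e3 : Real.exp (-k) * Real.exp k = 1 := by rw [← Real.exp_add]; simp
    rw [Real.cosh_eq, Real.sinh_eq]
    nlinarith [Real.exp_pos (-k)]
  have hcpos := Real.cosh_pos k
  have hεc : 2 ≤ ε * Real.cosh k := by
    have : 1 / (4 * ε ^ 2) ≤ Real.cosh k := by
      have e : k ^ 2 / 2 = 1 / (4 * ε ^ 2) := by rw [hk]; field_simp; norm_num
      linarith
    rw [div_le_iff₀ (by positivity)] at this
    nlinarith
  have hg : 16 ≤ ε ^ 4 * Real.cosh k ^ 4 := by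
    rw [← mul_pow]
    calc (16 : ℝ) = 2 ^ 4 := by norm_num
      _ ≤ _ := by gcongr
  generalize ε ^ 4 * Real.cosh k ^ 4 = g at *
  generalize Real.cosh k = c at *
  generalize Real.sinh k = S at *
  have h1 : 15 / 17 * (g + 1) ≤ g - 1 := by linarith
  have hk0 : 0 < k := by linarith
  have hg1 : 0 < g + 1 := by linarith
  have hS : 0 ≤ S := by linarith
  rw [le_div_iff₀ (by positivity)]
  calc 1 / (2 * ε) * (c * (g + 1)) ≤ 2 * (0.7 / ε) * (c / 2 * (15 / 17 * (g + 1))) := by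
        have : 0 ≤ 1 / ε * (c * (g + 1)) := by positivity
        have e1 : 1 / (2 * ε) * (c * (g + 1)) = 1 / 2 * (1 / ε * (c * (g + 1))) := by
          field_simp
        have e2 : 2 * (0.7 / ε) * (c / 2 * (15 / 17 * (g + 1)))
            = 21 / 34 * (1 / ε * (c * (g + 1))) := by
          field_simp
          norm_num
        rw [e1, e2]
        linarith
    _ ≤ _ := by gcongr

lemma ricW_neg (ε k r : ℝ) : ricW ε k (-r) = -ricW ε k r := by
  unfold ricW
  rw [mul_neg, Real.sinh_neg, Real.cosh_neg]
  ring

/-- Endpoint control by the quadratic form of `ℒ₁` (Lemma 7.8):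
`|q(±1)|² ≤ Cε(∫((q′)² + ε⁻²κ₁(s_ε)q²) + ∫q²)`. -/
theorem stmt13 :
    ∃ C > (0 : ℝ), ∃ ε₀ > (0 : ℝ), ∀ ε : ℝ, 0 < ε → ε ≤ ε₀ →
      ∀ q : ℝ → ℝ, ContDiff ℝ 1 q →
        (q 1) ^ 2 + (q (-1)) ^ 2 ≤
          C * ε * ((∫ r in (-1 : ℝ)..1,
              ((deriv q r) ^ 2
                + (ε ^ 2)⁻¹ * (2 * (1 - 6 * sE ε r + 6 * (sE ε r) ^ 2)) * (q r) ^ 2))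
            + ∫ r in (-1 : ℝ)..1, (q r) ^ 2) := by
  refine ⟨2, by norm_num, 1 / 8, by norm_num, fun ε hε h8 q hq => ?_⟩
  have hqc : Continuous q := hq.continuous
  have hq' : Continuous (deriv q) := hq.continuous_deriv_one
  have hsc := continuous_sE ε
  set k := Real.sqrt 2 / (2 * ε) with hk
  have hWc := continuous_ricW ε k
  have hVc := continuous_ricV ε k
  have hder : ∀ r, HasDerivAt (fun r => ricW ε k r * q r ^ 2)
      ((ricV ε k r - ricW ε k r ^ 2) * q r ^ 2 + ricW ε k r * (2 * q r * deriv q r)) r := by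
    intro r
    have h := (ricW_hasDerivAt ε k r).mul
      (((hq.differentiable (by norm_num)) r).hasDerivAt.pow 2)
    refine HasDerivAt.congr_deriv (f := fun r => ricW ε k r * q r ^ 2) h ?_
    simp
  have hftc := intervalIntegral.integral_eq_sub_of_hasDerivAt (a := (-1 : ℝ)) (b := 1)
    (fun r _ => hder r) (Continuous.intervalIntegrable (by fun_prop) _ _)
  rw [← intervalIntegral.integral_add (Continuous.intervalIntegrable (by fun_prop) _ _)
    (Continuous.intervalIntegrable (by fun_prop) _ _)]
  have hmono := intervalIntegral.integral_mono_on (μ := MeasureTheory.volume)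
    (a := (-1 : ℝ)) (b := 1) (by norm_num)
    (f := fun r => (ricV ε k r - ricW ε k r ^ 2) * q r ^ 2
      + ricW ε k r * (2 * q r * deriv q r))
    (g := fun r => ((deriv q r) ^ 2
      + (ε ^ 2)⁻¹ * (2 * (1 - 6 * sE ε r + 6 * (sE ε r) ^ 2)) * (q r) ^ 2) + q r ^ 2)
    (Continuous.intervalIntegrable (by fun_prop) _ _)
    (Continuous.intervalIntegrable (by fun_prop) _ _)
    (fun r _ => by
      have h := mul_le_mul_of_nonneg_right (ricV_le hε r) (sq_nonneg (q r))
      simp only [potE] at h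
      -- pointwise `(q' - w q)² ≥ 0`
      nlinarith [sq_nonneg (deriv q r - ricW ε k r * q r)])
  rw [hftc, ricW_neg] at hmono
  have hw := ricW_one hε h8
  rw [← hk] at hw
  have hb : 1 / (2 * ε) * (q 1 ^ 2 + q (-1) ^ 2)
      ≤ ricW ε k 1 * q 1 ^ 2 - -ricW ε k 1 * q (-1) ^ 2 := by
    nlinarith [mul_le_mul_of_nonneg_right hw (sq_nonneg (q 1)),
      mul_le_mul_of_nonneg_right hw (sq_nonneg (q (-1)))]
  have hfin := mul_le_mul_of_nonneg_left (hb.trans hmono) (by positivity : 0 ≤ 2 * ε)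
  refine le_trans (le_of_eq ?_) hfin
  field_simp
end

section
/- Let 𝐧 ∈ ℝⁿ be a unit vector, A₋ ∈ O⁻(n), and A₊ = A₋(I − 2𝐧𝐧ᵀ) (so (A₋, A₊) is a minimal pair). Let D₊, D₋ be n×n real matrices such that A₊ᵀD₊ and A₋ᵀD₋ are antisymmetric. Then the following three conditions are equivalent: (i) A₊ᵀD₊ − D₊ᵀA₊ = A₋ᵀD₋ − D₋ᵀA₋ and A₊D₊ᵀ − D₊A₊ᵀ = A₋D₋ᵀ − D₋A₋ᵀ; (ii) D₊ = D₋; (iii) A₊ᵀD₊ = A₋ᵀD₋, and the common matrix W = A₊ᵀD₊ = A₋ᵀD₋ satisfies W𝐧 = 0 (i.e., W is an antisymmetric matrix annihilating 𝐧). -/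
/-!
Put `R = 1 - 2 v vᵀ`, a symmetric involution with `R v = -v`, and `W± = A±ᵀ D±`, both antisymmetric,
so that `D₋ = A₋ W₋` and `D₊ = A₋ R W₊`. The key fact is that an antisymmetric `W` commutes with `R`
exactly when `W v = 0` (`mulVec_eq_zero_of_commute`, `reflection_mul_eq`), in which case
`R W = W = W R`: indeed `v ⬝ W v = 0` gives `R (W v) = W v`, while commutation gives
`R (W v) = W (R v) = -W v`. The pair of commutator equations says `W₊ = W₋ = W`
and `R W R = W`. The equation `D₊ = D₋` says
`R W₊ = W₋`, and the transpose of this is `W₊ R = W₋`. Either way `R` commutes with `W₊`, so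
`W₊ v = 0` and `W₊ = W₋`; conversely, these two equalities give `R W = W = W R`, and with it both
other conditions.
-/

open Matrix

section Reflection

variable {n : ℕ} {v : Fin n → ℝ} {W : Matrix (Fin n) (Fin n) ℝ}

theorem reflection_transpose (v : Fin n → ℝ) :
    (1 - (2 : ℝ) • vecMulVec v v)ᵀ = 1 - (2 : ℝ) • vecMulVec v v := by
  simp [transpose_sub, transpose_smul, transpose_vecMulVec]

theorem reflection_mulVec (v x : Fin n → ℝ) :
    (1 - (2 : ℝ) • vecMulVec v v) *ᵥ x = x - (2 * (v ⬝ᵥ x)) • v := by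
  rw [sub_mulVec, one_mulVec, smul_mulVec, vecMulVec_mulVec]
  ext i
  simp
  ring

theorem reflection_mul_self (hv : v ⬝ᵥ v = 1) :
    (1 - (2 : ℝ) • vecMulVec v v) * (1 - (2 : ℝ) • vecMulVec v v) = 1 := by
  have h : vecMulVec v v * vecMulVec v v = vecMulVec v v := by
    rw [vecMulVec_mul_vecMulVec, hv]; simp
  simp only [sub_mul, mul_sub, one_mul, mul_one, smul_mul_assoc, mul_smul_comm, h]
  module

theorem dotProduct_mulVec_eq_zero (hW : Wᵀ = -W) (x : Fin n → ℝ) : x ⬝ᵥ W *ᵥ x = 0 := by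
  have h : x ⬝ᵥ W *ᵥ x = -(x ⬝ᵥ W *ᵥ x) := by
    conv_lhs => rw [dotProduct_mulVec, ← mulVec_transpose, hW, neg_mulVec, neg_dotProduct,
      dotProduct_comm]
  linarith

theorem mulVec_eq_zero_of_commute (hv : v ⬝ᵥ v = 1) (hW : Wᵀ = -W)
    (h : (1 - (2 : ℝ) • vecMulVec v v) * W = W * (1 - (2 : ℝ) • vecMulVec v v)) :
    W *ᵥ v = 0 := by
  have h1 := congrArg (· *ᵥ v) h
  simp only [← mulVec_mulVec, reflection_mulVec, dotProduct_mulVec_eq_zero hW, hv, mulVec_sub,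
    mulVec_smul] at h1
  ext i
  have h2 := congrFun h1 i
  simp at h2
  simp
  linarith

theorem mul_reflection_eq (h : W *ᵥ v = 0) : W * (1 - (2 : ℝ) • vecMulVec v v) = W := by
  rw [mul_sub, mul_one, mul_smul_comm, mul_vecMulVec, h]
  simp

theorem reflection_mul_eq (hW : Wᵀ = -W) (h : W *ᵥ v = 0) :
    (1 - (2 : ℝ) • vecMulVec v v) * W = W := by
  have h1 := congrArg transpose (mul_reflection_eq h)
  rw [transpose_mul, reflection_transpose, hW, mul_neg] at h1
  exact neg_injective h1

end Reflection

theorem stmt19 (n : ℕ) (v : Fin n → ℝ) (hv : (∑ i, v i ^ 2) = 1)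
    (Am : Matrix (Fin n) (Fin n) ℝ) (hAmO : Amᵀ * Am = 1) (hAmdet : Am.det = -1)
    (Ap : Matrix (Fin n) (Fin n) ℝ)
    (hAp : Ap = Am * (1 - (2 : ℝ) • vecMulVec v v))
    (Dp Dm : Matrix (Fin n) (Fin n) ℝ)
    (hDp : (Apᵀ * Dp)ᵀ = -(Apᵀ * Dp)) (hDm : (Amᵀ * Dm)ᵀ = -(Amᵀ * Dm)) :
    ((Apᵀ * Dp - Dpᵀ * Ap = Amᵀ * Dm - Dmᵀ * Am ∧
        Ap * Dpᵀ - Dp * Apᵀ = Am * Dmᵀ - Dm * Amᵀ) ↔ Dp = Dm) ∧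
    (Dp = Dm ↔ (Apᵀ * Dp = Amᵀ * Dm ∧ (Apᵀ * Dp).mulVec v = 0)) := by
  have hvv : v ⬝ᵥ v = 1 := by rw [← hv]; simp [dotProduct, sq]
  have hAmO' : Am * Amᵀ = 1 := mul_eq_one_comm.mp hAmO
  have hR2 := reflection_mul_self hvv
  have hRt := reflection_transpose v
  have hcomm := fun W => mulVec_eq_zero_of_commute (W := W) hvv
  have hRW := fun W => reflection_mul_eq (W := W) (v := v)
  have hWR := fun W => mul_reflection_eq (W := W) (v := v)
  generalize (1 - (2 : ℝ) • vecMulVec v v) = R at *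
  have hApt : Apᵀ = R * Amᵀ := by rw [hAp, transpose_mul, hRt]
  have eDm : Dm = Am * (Amᵀ * Dm) := by rw [← mul_assoc, hAmO', one_mul]
  have eDp : Dp = Am * (R * (Apᵀ * Dp)) := by
    rw [hApt, mul_assoc R, ← mul_assoc R R, hR2, one_mul, ← mul_assoc, hAmO', one_mul]
  have tp : Dpᵀ * Ap = (Apᵀ * Dp)ᵀ := by simp
  have tm : Dmᵀ * Am = (Amᵀ * Dm)ᵀ := by simp
  rw [hDp] at tp
  rw [hDm] at tm
  rw [tp, tm]
  generalize Apᵀ * Dp = Wp at *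
  generalize Amᵀ * Dm = Wm at *
  subst eDm eDp
  rw [hApt, hAp]
  simp only [transpose_mul, hRt, hDp, hDm]
  have cancel : ∀ X Y : Matrix (Fin n) (Fin n) ℝ, Am * X = Am * Y → X = Y := fun X Y h => by
    simpa [← mul_assoc, hAmO] using congrArg (Amᵀ * ·) h
  have cancel' : ∀ X Y : Matrix (Fin n) (Fin n) ℝ, X * Amᵀ = Y * Amᵀ → X = Y := fun X Y h => by
    simpa [mul_assoc, hAmO] using congrArg (· * Am) h
  have iii_ii : Wp = Wm ∧ Wp *ᵥ v = 0 → Am * (R * Wp) = Am * Wm := by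
    rintro ⟨rfl, h⟩
    rw [hRW _ hDp h]
  have ii_iii : Am * (R * Wp) = Am * Wm → Wp = Wm ∧ Wp *ᵥ v = 0 := by
    intro h
    have h1 := cancel _ _ h
    have h2 : Wp * R = Wm := by
      have := congrArg transpose h1
      rw [transpose_mul, hRt, hDp, hDm, neg_mul] at this
      exact neg_injective this
    have h3 := hcomm _ hDp (h1.trans h2.symm)
    exact ⟨(hWR _ h3).symm.trans h2, h3⟩
  refine ⟨⟨fun ⟨h1, h2⟩ => iii_ii ?_, fun h => ?_⟩, ii_iii, iii_ii⟩
  · have e : Wp = Wm := by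
      have : (2 : ℝ) • Wp = (2 : ℝ) • Wm := by
        rw [two_smul, two_smul]; simpa using h1
      exact smul_right_injective _ two_ne_zero this
    subst e
    refine ⟨rfl, hcomm _ hDp ?_⟩
    -- The second equation reads `-2 A₋ (R W R) A₋ᵀ = -2 A₋ W A₋ᵀ`.
    have h3 : (-2 : ℝ) • (Am * (R * Wp * R * Amᵀ)) = (-2 : ℝ) • (Am * (Wp * Amᵀ)) := by
      simp only [mul_assoc, neg_mul, mul_neg] at h2 ⊢
      rw [neg_smul, neg_smul, two_smul, two_smul, neg_add', neg_add']
      exact h2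
    have h4 := cancel' _ _ (cancel _ _ (smul_right_injective _ (by norm_num) h3))
    calc R * Wp = R * Wp * R * R := by rw [mul_assoc _ R R, hR2, mul_one]
      _ = Wp * R := by rw [h4]
  · obtain ⟨rfl, h0⟩ := ii_iii h
    refine ⟨rfl, ?_⟩
    have a := hRW _ hDp h0
    have b := hWR _ h0
    simp only [neg_mul, mul_neg, a, b, mul_assoc]
    simp only [← mul_assoc R Wp, ← mul_assoc Wp R, a, b]
end
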